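/- If a Γ-equivariant A-module M descends to A^{⟨s_i⟩} for every simple reflection s_i of Γ (i = 1, …, n), then M descends to A^Γ. -/

import Mathlib

open scoped TensorProduct

noncomputable section

abbrev Vd (d : ℕ) := Fin d → ℂ
abbrev Ad (d : ℕ) := MvPolynomial (Fin d) ℂ

/-- Action of `g ∈ GL(V)` on polynomials: substitute `X j ↦ (g⁻¹ x)_j`. -/
def glAct {d : ℕ} (g : GL (Fin d) ℂ) : Ad d →ₐ[ℂ] Ad d :=
  MvPolynomial.aeval fun j =>
    ∑ k, ((g⁻¹ : GL (Fin d) ℂ) : Matrix (Fin d) (Fin d) ℂ) j k • MvPolynomial.X k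

/-- Embedding of linear forms on `V` as degree-one polynomials. -/
def lin {d : ℕ} (θ : Vd d →ₗ[ℂ] ℂ) : Ad d :=
  ∑ j, θ (Pi.single j 1) • MvPolynomial.X j

structure CoxeterSetup (d n : ℕ) where
  Γ : Subgroup (GL (Fin d) ℂ)
  finite : Finite Γ
  s : Fin n → Γ
  gen : Subgroup.closure (Set.range s) = (⊤ : Subgroup Γ)
  α : Fin n → (Vd d →ₗ[ℂ] ℂ)
  coroot : Fin n → Vd d
  pairing : ∀ i, α i (coroot i) = 2
  refl : ∀ i (v : Vd d),
    ((s i : GL (Fin d) ℂ) : Matrix (Fin d) (Fin d) ℂ).mulVec v = v - α i v • coroot i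


/-- The subalgebra of `Γ'`-invariant polynomials. -/
def FixedSub {d n : ℕ} (S : CoxeterSetup d n) (Γ' : Subgroup S.Γ) : Subalgebra ℂ (Ad d) where
  carrier := {f | ∀ g ∈ Γ', glAct (g : GL (Fin d) ℂ) f = f}
  mul_mem' := fun hf hg g hgmem => by simp [map_mul, hf g hgmem, hg g hgmem]
  add_mem' := fun hf hg g hgmem => by simp [map_add, hf g hgmem, hg g hgmem]
  algebraMap_mem' := fun c g _ => by simp

/-- `M` (with `Γ'`-action `ρ`) descends to `A^{Γ'}`. -/
def Descends {d n : ℕ} (S : CoxeterSetup d n) (Γ' : Subgroup S.Γ) (M : Type)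
    [AddCommGroup M] [Module ℂ M] [Module (Ad d) M] [IsScalarTower ℂ (Ad d) M]
    (ρ : Γ' →* Module.End ℂ M) : Prop :=
  ∃ (N : Type) (_ : AddCommGroup N) (_ : Module (FixedSub S Γ') N)
    (e : ((Ad d) ⊗[FixedSub S Γ'] N) ≃ₗ[Ad d] M),
    ∀ (g : Γ') (a : Ad d) (x : N),
      ρ g (e (a ⊗ₜ x)) = e ((glAct ((g : S.Γ) : GL (Fin d) ℂ) a) ⊗ₜ x)

/-!
Descent along a reflection `t` with root `p` provides every `m : M` with a unique `t`-invariant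
divided difference `w`, defined by `m - t • m = p • w`. If this holds for all simple reflections,
the kernel and the range of the canonical map `A ⊗ M^Γ → M`, with the tensor product over `A^Γ`,
are stable under divided differences. For bijectivity it therefore suffices that if `L` and `L'`
are stable submodules and `L` contains the invariants of `L'`, then `L' ≤ L`.

Let `J` be the colon ideal of all `a` with `a • L' ≤ L`, and `c` the product of the roots of all
reflections. The function `Γ → A` with value `c` at `1` and `0` elsewhere is an `A`-linear
combination `∑ a_j • (g ↦ g • b_j)` of orbit maps, so `c • m = ∑ a_j • ∑ g • (b_j • m)` for
`m ∈ L'` lies in `L`, and `c ∈ J`. Moreover `J` is stable under divided differences, hence generated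
by invariants, by averaging and induction on the degree. Any sum `∑ g • (c * a)` is an invariant
divisible by `c`, hence by `c ^ 2`; so `∑ g • (c * x) ∈ c ^ 2 * J` for `x ∈ J`. Taking `x = c` gives
`|Γ| * c ^ 2 ∈ c ^ 2 * J`, that is, `J = A`.
-/

section Averaging

variable {Γ A X ι : Type*} [Group Γ]

theorem isUnit_natCast_of_algebra_rat [Ring A] [Algebra ℚ A] {n : ℕ} (hn : n ≠ 0) :
    IsUnit (n : A) := by
  simpa only [map_natCast] using (Nat.cast_ne_zero (R := ℚ).2 hn).isUnit.map (algebraMap ℚ A)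

theorem isUnit_two_of_algebra_rat (A : Type*) [Ring A] [Algebra ℚ A] : IsUnit (2 : A) :=
  isUnit_natCast_of_algebra_rat two_ne_zero

theorem smul_sum_smul [Fintype Γ] [AddCommMonoid X] [DistribMulAction Γ X] (h : Γ) (x : X) :
    h • ∑ g : Γ, g • x = ∑ g : Γ, g • x := by
  simp only [Finset.smul_sum, smul_smul]
  exact Fintype.sum_equiv (Equiv.mulLeft h) _ _ fun _ ↦ rfl

theorem forall_smul_mem_of_closure_eq_top [MulAction Γ X] {s : ι → Γ}
    (hs : Subgroup.closure (Set.range s) = ⊤) (hs_mul : ∀ i, s i * s i = 1) {P : Set X}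
    (hP : ∀ i, ∀ x ∈ P, s i • x ∈ P) (g : Γ) : ∀ x ∈ P, g • x ∈ P := by
  have hg : g ∈ Subgroup.closure (Set.range s) := hs ▸ Subgroup.mem_top g
  induction hg using Subgroup.closure_induction'' with
  | mem _ h => obtain ⟨i, rfl⟩ := h; exact hP i
  | inv_mem _ h => obtain ⟨i, rfl⟩ := h; rw [inv_eq_of_mul_eq_one_left (hs_mul i)]; exact hP i
  | one => simp only [one_smul, imp_self, implies_true]
  | mul g h _ _ hg hh => intro x hx; rw [mul_smul]; exact hg _ (hh x hx)

variable [AddCommGroup X] [DistribMulAction Γ X]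

theorem sub_smul_mem_of_closure_eq_top {s : ι → Γ}
    (hs : Subgroup.closure (Set.range s) = ⊤) {L P : AddSubgroup X}
    (hP : ∀ (g : Γ), ∀ x ∈ P, g • x ∈ P) (hL : ∀ i, ∀ x ∈ P, x - s i • x ∈ L) (g : Γ) :
    ∀ x ∈ P, x - g • x ∈ L := by
  have hg : g ∈ Subgroup.closure (Set.range s) := hs ▸ Subgroup.mem_top g
  induction hg using Subgroup.closure_induction with
  | mem _ h => obtain ⟨i, rfl⟩ := h; exact hL i
  | one => intro x _; simp only [one_smul, sub_self, zero_mem]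
  | mul g h _ _ hg hh =>
    intro x hx
    rw [mul_smul, ← sub_add_sub_cancel x (h • x)]
    exact L.add_mem (hh x hx) (hg _ (hP h x hx))
  | inv g _ hg =>
    intro x hx
    simpa only [smul_inv_smul, neg_sub] using L.neg_mem (hg _ (hP g⁻¹ x hx))

theorem mem_span_fixedPoints_of_filtration [Finite Γ] [Ring A] [Algebra ℚ A] [Module A X]
    {s : ι → Γ} (hs : Subgroup.closure (Set.range s) = ⊤) (α : ι → A) {G : ℕ → AddSubgroup X}
    (hG_zero : G 0 = ⊥) (hG_smul : ∀ n (g : Γ), ∀ x ∈ G n, g • x ∈ G n)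
    (hG_div : ∀ n i, ∀ x ∈ G (n + 1), ∃ w ∈ G n, x - s i • x = α i • w) (n : ℕ) :
    ∀ x ∈ G n, x ∈ Submodule.span A {y | (∀ g : Γ, g • y = y) ∧ ∃ n, y ∈ G n} := by
  have := Fintype.ofFinite Γ
  set L := Submodule.span A {y | (∀ g : Γ, g • y = y) ∧ ∃ n, y ∈ G n} with hL
  clear_value L
  induction n with
  | zero =>
    intro x hx
    rw [hG_zero, AddSubgroup.mem_bot] at hx
    exact hx ▸ zero_mem _
  | succ n ih =>
    intro x hx
    have sub_smul_mem (g : Γ) : x - g • x ∈ L := by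
      refine sub_smul_mem_of_closure_eq_top (L := L.toAddSubgroup) hs (hG_smul (n + 1)) ?_ g x hx
      intro i y hy
      obtain ⟨w, hw, hyw⟩ := hG_div n i y hy
      exact hyw ▸ L.smul_mem _ (ih w hw)
    have sum_mem : ∑ g : Γ, g • x ∈ L := hL ▸ Submodule.subset_span
      ⟨fun h ↦ smul_sum_smul h x, n + 1, sum_mem fun g _ ↦ hG_smul (n + 1) g x hx⟩
    have card_smul_mem : (Fintype.card Γ : A) • x ∈ L := by
      have key := L.add_mem (L.sum_mem (t := Finset.univ) fun g _ ↦ sub_smul_mem g) sum_mem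
      rwa [← Finset.sum_add_distrib, Finset.sum_congr rfl fun g _ ↦ sub_add_cancel x (g • x),
        Finset.sum_const, Finset.card_univ, ← Nat.cast_smul_eq_nsmul A] at key
    exact (L.smul_mem_iff_of_isUnit (isUnit_natCast_of_algebra_rat Fintype.card_ne_zero)).1
      card_smul_mem

end Averaging

section Reflections

variable {Γ A ι : Type*} [Group Γ] [CommRing A] [MulSemiringAction Γ A]

/-- `t` acts on `A` as a reflection with root `p`: an involution negating the prime `p` and
acting trivially modulo `p`. -/
structure IsReflection (t : Γ) (p : A) : Prop where
  prime : Prime p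
  mul_self : t * t = 1
  smul_root : t • p = -p
  dvd_sub_smul : ∀ a : A, p ∣ a - t • a

/-- An abstract degree filtration, with `F n` in the role of the polynomials of degree less
than `n`. -/
structure IsDegreeFiltration (F : ℕ → AddSubgroup A) : Prop where
  zero : F 0 = ⊥
  exhaustive : ∀ a, ∃ n, a ∈ F n
  of_mul_mem : ∀ {n : ℕ} {p b : A}, Prime p → p * b ∈ F (n + 1) → b ∈ F n

/-- The structure which a finite reflection group induces on its ring of polynomial functions:
`Γ` is generated by the reflections `s i` with roots `α i`, fixes the units of `A`, and preserves
the degree filtration `F`. -/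
structure IsReflectionSystem (s : ι → Γ) (α : ι → A) (F : ℕ → AddSubgroup A) : Prop where
  isReflection : ∀ i, IsReflection (s i) (α i)
  closure_range : Subgroup.closure (Set.range s) = ⊤
  smul_unit : ∀ (g : Γ) (u : Aˣ), g • (u : A) = u
  filtration : IsDegreeFiltration F
  smul_mem : ∀ (n : ℕ) (g : Γ), ∀ a ∈ F n, g • a ∈ F n

theorem IsDegreeFiltration.eq_zero_of_sum_smul_eq_zero [Fintype Γ] [IsDomain A] [Algebra ℚ A]
    {F : ℕ → AddSubgroup A} (hF : IsDegreeFiltration F) {p : A} (hp : Prime p)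
    (hfix : ∀ g : Γ, g • p = p) (hdvd : ∀ (g : Γ) (a : A), p ∣ g • a - a) {u : A}
    (hu : ∑ g : Γ, g • u = 0) : u = 0 := by
  obtain ⟨n, hn⟩ := hF.exhaustive u
  induction n generalizing u with
  | zero => simpa only [hF.zero, AddSubgroup.mem_bot] using hn
  | succ n ih =>
    have dvd_card_mul : p ∣ Fintype.card Γ * u := by
      have key : p ∣ ∑ g : Γ, (g • u - u) := Finset.dvd_sum fun g _ ↦ hdvd g u
      rwa [Finset.sum_sub_distrib, hu, Finset.sum_const, Finset.card_univ, nsmul_eq_mul, zero_sub,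
        dvd_neg] at key
    obtain ⟨y, rfl⟩ :=
      ((isUnit_natCast_of_algebra_rat Fintype.card_ne_zero).dvd_mul_left).1 dvd_card_mul
    simp only [smul_mul', hfix, ← Finset.mul_sum] at hu
    rw [ih ((mul_eq_zero.1 hu).resolve_left hp.ne_zero) (hF.of_mul_mem hp hn), mul_zero]

theorem IsDegreeFiltration.smul_eq_self [Finite Γ] [IsDomain A] [Algebra ℚ A]
    {F : ℕ → AddSubgroup A} (hF : IsDegreeFiltration F) {p : A} (hp : Prime p)
    (hfix : ∀ g : Γ, g • p = p) (hdvd : ∀ (g : Γ) (a : A), p ∣ g • a - a) (g : Γ) (a : A) :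
    g • a = a := by
  have := Fintype.ofFinite Γ
  refine sub_eq_zero.1 (hF.eq_zero_of_sum_smul_eq_zero hp hfix hdvd ?_)
  simp only [smul_sub, Finset.sum_sub_distrib, smul_smul]
  exact sub_eq_zero.2 (Fintype.sum_equiv (Equiv.mulRight g) _ (fun h : Γ ↦ h • a) fun _ ↦ rfl)

theorem IsDegreeFiltration.inertia_inf_stabilizer_eq_bot [Finite Γ] [IsDomain A] [Algebra ℚ A]
    [FaithfulSMul Γ A] {F : ℕ → AddSubgroup A} (hF : IsDegreeFiltration F) {p : A}
    (hp : Prime p) : (Ideal.span {p}).inertia Γ ⊓ MulAction.stabilizer Γ p = ⊥ := by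
  refine (Subgroup.eq_bot_iff_forall _).2 fun g hg ↦ FaithfulSMul.eq_of_smul_eq_smul (α := A) ?_
  intro a
  rw [one_smul]
  refine hF.smul_eq_self (Γ := ↥((Ideal.span {p}).inertia Γ ⊓ MulAction.stabilizer Γ p)) hp
    (fun h ↦ h.2.2) (fun h a ↦ Ideal.mem_span_singleton.1 (h.2.1 a)) ⟨g, hg⟩ a

namespace IsReflection

variable {t t' : Γ} {p p' : A}

theorem inv_eq (ht : IsReflection t p) : t⁻¹ = t :=
  inv_eq_of_mul_eq_one_left ht.mul_self

theorem smul_smul_self {X : Type*} [MulAction Γ X] (ht : IsReflection t p) (x : X) :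
    t • t • x = x := by
  rw [smul_smul, ht.mul_self, one_smul]

theorem conj (ht : IsReflection t p) (g : Γ) : IsReflection (g * t * g⁻¹) (g • p) where
  prime := (MulEquiv.prime_iff (MulSemiringAction.toRingEquiv Γ A g)).2 ht.prime
  mul_self := by
    rw [conj_mul, ht.mul_self, mul_one, mul_inv_cancel]
  smul_root := by
    rw [mul_smul, inv_smul_smul, mul_smul, ht.smul_root, smul_neg]
  dvd_sub_smul a := by
    obtain ⟨b, hb⟩ := ht.dvd_sub_smul (g⁻¹ • a)
    exact ⟨g • b, by rw [← smul_mul', ← hb, smul_sub, smul_inv_smul, mul_smul, mul_smul]⟩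

/-- Only the reflection `t` itself has a root divisible by the root `p` of `t`, since the product
of two such reflections is inert at `p` and fixes `p`. -/
theorem eq_of_dvd [Finite Γ] [IsDomain A] [Algebra ℚ A] [FaithfulSMul Γ A]
    {F : ℕ → AddSubgroup A} (hF : IsDegreeFiltration F)
    (hunit : ∀ (g : Γ) (u : Aˣ), g • (u : A) = u) (ht : IsReflection t p)
    (ht' : IsReflection t' p') (hpp' : p ∣ p') : t = t' := by
  obtain ⟨u, rfl⟩ : Associated p p' := ht.prime.associated_of_dvd ht'.prime hpp'
  have smul_root : t' • p = -p := by
    have := ht'.smul_root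
    rw [smul_mul', hunit, ← neg_mul] at this
    exact u.isUnit.mul_right_cancel this
  have mem : t * t' ∈ (Ideal.span {p}).inertia Γ ⊓ MulAction.stabilizer Γ p := by
    refine Subgroup.mem_inf.2 ⟨fun a ↦ Ideal.mem_span_singleton.2 ?_, ?_⟩
    · have key := dvd_add (ht.dvd_sub_smul (t' • a)) (dvd_of_mul_right_dvd (ht'.dvd_sub_smul a))
      rwa [add_comm, sub_add_sub_cancel, ← mul_smul, dvd_sub_comm] at key
    · rw [MulAction.mem_stabilizer_iff, mul_smul, smul_root, smul_neg, ht.smul_root, neg_neg]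
  rw [hF.inertia_inf_stabilizer_eq_bot ht.prime, Subgroup.mem_bot] at mem
  rw [eq_inv_of_mul_eq_one_left mem, ht'.inv_eq]

theorem dvd_of_smul_eq_neg [Algebra ℚ A] (ht : IsReflection t p) {a : A} (ha : t • a = -a) :
    p ∣ a := by
  have key := ht.dvd_sub_smul a
  rw [ha, sub_neg_eq_add, ← two_mul] at key
  exact (isUnit_two_of_algebra_rat A).dvd_mul_left.1 key

end IsReflection

end Reflections

section Discriminant

variable {Γ A ι : Type*} [Group Γ] [CommRing A] [MulSemiringAction Γ A]

variable (Γ) in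
/-- `c` is, up to a unit, the product of the roots of all reflections in `Γ`, characterized by its
divisibility property. -/
structure IsDiscriminant (c : A) : Prop where
  ne_zero : c ≠ 0
  dvd_iff : ∀ x, c ∣ x ↔ ∀ (t : Γ) (p : A), IsReflection t p → p ∣ x

theorem exists_isDiscriminant [Finite Γ] [IsDomain A] [UniqueFactorizationMonoid A]
    [Algebra ℚ A] : ∃ c : A, IsDiscriminant Γ c := by
  classical
  have := Fintype.ofFinite Γ
  let := UniqueFactorizationMonoid.strongNormalizationMonoid (α := A)
  let := UniqueFactorizationMonoid.toNormalizedGCDMonoid A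
  let root (t : Γ) : A := if h : ∃ p, IsReflection t p then h.choose else 1
  have root_dvd_iff {t : Γ} {p : A} (ht : IsReflection t p) (x : A) : root t ∣ x ↔ p ∣ x := by
    have h : ∃ p, IsReflection t p := ⟨p, ht⟩
    have hroot : IsReflection t (root t) := by simpa only [root, dif_pos h] using h.choose_spec
    exact ⟨(ht.dvd_of_smul_eq_neg hroot.smul_root).trans,
      (hroot.dvd_of_smul_eq_neg ht.smul_root).trans⟩
  refine ⟨Finset.univ.lcm root, ?_, fun x ↦ ?_⟩
  · rw [Ne, Finset.lcm_eq_zero_iff]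
    rintro ⟨t, -, ht⟩
    by_cases h : ∃ p : A, IsReflection t p
    · obtain ⟨p, hp⟩ := h
      exact hp.prime.ne_zero (zero_dvd_iff.1 (ht ▸ (root_dvd_iff hp p).2 dvd_rfl))
    · simp only [root, dif_neg h, one_ne_zero] at ht
  · rw [Finset.lcm_dvd_iff]
    refine ⟨fun hx t p ht ↦ (root_dvd_iff ht x).1 (hx t (Finset.mem_univ t)), fun hx t _ ↦ ?_⟩
    by_cases h : ∃ p : A, IsReflection t p
    · obtain ⟨p, hp⟩ := h
      exact (root_dvd_iff hp x).2 (hx t p hp)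
    · simp only [root, dif_neg h, one_dvd]

namespace IsDiscriminant

variable {c : A}

theorem root_dvd (hc : IsDiscriminant Γ c) {t : Γ} {p : A} (ht : IsReflection t p) : p ∣ c :=
  (hc.dvd_iff c).1 dvd_rfl t p ht

theorem dvd_smul (hc : IsDiscriminant Γ c) (g : Γ) : c ∣ g • c := by
  refine (hc.dvd_iff _).2 fun t p ht ↦ ?_
  obtain ⟨b, hb⟩ := hc.root_dvd (ht.conj g⁻¹)
  exact ⟨g • b, by rw [hb, smul_mul', smul_inv_smul]⟩

theorem not_mul_root_dvd [IsDomain A] (hc : IsDiscriminant Γ c) {t : Γ} {p b : A}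
    (ht : IsReflection t p) (hb : c = p * b) : ¬ p ∣ b := by
  intro hpb
  have hcb : c ∣ b := by
    refine (hc.dvd_iff b).2 fun t' q ht' ↦ ?_
    rcases ht'.prime.dvd_or_dvd (hb ▸ hc.root_dvd ht') with hqp | hqb
    · exact hqp.trans hpb
    · exact hqb
  have hb_ne : b ≠ 0 := by
    rintro rfl
    exact hc.ne_zero (hb.trans (mul_zero p))
  exact ht.prime.not_isUnit (isUnit_of_dvd_one ((mul_dvd_mul_iff_right hb_ne).1
    (by rwa [← hb, one_mul])))

theorem smul_eq_neg [IsDomain A] [Algebra ℚ A]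
    (hunit : ∀ (g : Γ) (u : Aˣ), g • (u : A) = u) (hc : IsDiscriminant Γ c) {t : Γ} {p : A}
    (ht : IsReflection t p) : t • c = -c := by
  obtain ⟨v, hv⟩ := hc.dvd_smul t
  have hv_mul : v * (t • v) = 1 := by
    refine mul_left_cancel₀ hc.ne_zero ?_
    rw [← mul_assoc, ← hv, ← smul_mul', ← hv, ht.smul_smul_self, mul_one]
  have hv_fixed : t • v = v := hunit t (Units.mkOfMulEqOne v _ hv_mul)
  rw [hv_fixed, mul_self_eq_one_iff] at hv_mul
  rcases hv_mul with rfl | rfl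
  · obtain ⟨b, hb⟩ := hc.root_dvd ht
    refine absurd (ht.dvd_of_smul_eq_neg (mul_left_cancel₀ ht.prime.ne_zero ?_))
      (hc.not_mul_root_dvd ht hb)
    rw [mul_one, hb, smul_mul', ht.smul_root] at hv
    rw [mul_neg, ← hv, neg_mul, neg_neg]
  · rw [hv, mul_neg_one]

/-- An invariant divisible by the anti-invariant `c` is `c` times an anti-invariant. -/
theorem sq_dvd_of_dvd [IsDomain A] [Algebra ℚ A]
    (hunit : ∀ (g : Γ) (u : Aˣ), g • (u : A) = u) (hc : IsDiscriminant Γ c) {y : A}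
    (hy : ∀ g : Γ, g • y = y) (hcy : c ∣ y) : c ^ 2 ∣ y := by
  obtain ⟨z, rfl⟩ := hcy
  rw [sq]
  refine mul_dvd_mul_left c ((hc.dvd_iff z).2 fun t p ht ↦ ht.dvd_of_smul_eq_neg ?_)
  refine mul_left_cancel₀ hc.ne_zero ?_
  rw [mul_neg, ← hy t, smul_mul', hc.smul_eq_neg hunit ht, neg_mul, neg_neg]

theorem sq_dvd_sum_smul [Fintype Γ] [IsDomain A] [Algebra ℚ A]
    (hunit : ∀ (g : Γ) (u : Aˣ), g • (u : A) = u) (hc : IsDiscriminant Γ c) (a : A) :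
    c ^ 2 ∣ ∑ g : Γ, g • (c * a) :=
  hc.sq_dvd_of_dvd hunit (fun h ↦ smul_sum_smul h (c * a)) <| Finset.dvd_sum fun g _ ↦ by
    rw [smul_mul']
    exact (hc.dvd_smul g).mul_right _

theorem smul_sq [IsDomain A] [Algebra ℚ A] {s : ι → Γ} {α : ι → A} {F : ℕ → AddSubgroup A}
    (R : IsReflectionSystem s α F) (hc : IsDiscriminant Γ c) (g : Γ) : g • c ^ 2 = c ^ 2 := by
  refine forall_smul_mem_of_closure_eq_top (P := {c ^ 2}) R.closure_range
    (fun i ↦ (R.isReflection i).mul_self) ?_ g _ rfl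
  rintro i _ rfl
  rw [smul_pow', hc.smul_eq_neg R.smul_unit (R.isReflection i), neg_sq]
  rfl

end IsDiscriminant

end Discriminant

section DividedDifferences

variable {Γ A M ι : Type*} [Group Γ] [CommRing A] [AddCommGroup M] [Module A M]
  [DistribMulAction Γ M]

variable (M) in
/-- Every `m - t • m` is uniquely `p` times a `t`-invariant element of `M`, the divided difference
of `m`. -/
def HasDividedDifference (t : Γ) (p : A) : Prop :=
  ∀ m : M, ∃! w, t • w = w ∧ m - t • m = p • w

theorem HasDividedDifference.eq_zero_of_smul_eq_zero {t : Γ} {p : A}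
    (hM : HasDividedDifference M t p) {w : M} (hw : t • w = w) (hpw : p • w = 0) : w = 0 := by
  refine (hM 0).unique ⟨hw, ?_⟩ ⟨smul_zero t, ?_⟩
  · rw [hpw, smul_zero, sub_zero]
  · rw [smul_zero, smul_zero, sub_zero]

theorem HasDividedDifference.of_equiv {X : Type*} [AddCommGroup X] [Module A X]
    [DistribMulAction Γ X] {t : Γ} {p : A}
    (hX : HasDividedDifference X t p) (e : X ≃ₗ[A] M) (he : ∀ x, e (t • x) = t • e x) :
    HasDividedDifference M t p := by
  have iff_map (x w : X) : (t • w = w ∧ x - t • x = p • w) ↔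
      (t • e w = e w ∧ e x - t • e x = p • e w) := by
    simp only [← he, ← map_sub, ← map_smul, e.injective.eq_iff]
  intro m
  obtain ⟨x, rfl⟩ := e.surjective m
  obtain ⟨w, hw, hw_unique⟩ := hX x
  refine ⟨e w, (iff_map x w).1 hw, fun v hv ↦ ?_⟩
  obtain ⟨v, rfl⟩ := e.surjective v
  rw [hw_unique v ((iff_map x v).2 hv)]

/-- The submodule `L` contains the divided differences of its elements. -/
def IsDividedDifferenceStable (s : ι → Γ) (α : ι → A) (L : Submodule A M) : Prop :=
  ∀ i, ∀ m ∈ L, ∀ w, s i • w = w → m - s i • m = α i • w → w ∈ L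

variable [MulSemiringAction Γ A]

theorem IsReflection.hasDividedDifference [IsDomain A] {t : Γ} {p : A} (ht : IsReflection t p) :
    HasDividedDifference A t p := by
  intro a
  obtain ⟨w, hw⟩ := ht.dvd_sub_smul a
  refine ⟨w, ⟨mul_left_cancel₀ ht.prime.ne_zero ?_, hw⟩,
    fun w' hw' ↦ mul_left_cancel₀ ht.prime.ne_zero (hw'.2.symm.trans hw)⟩
  rw [← hw, ← neg_inj, ← neg_mul, ← ht.smul_root, ← smul_mul', ← hw, smul_sub, ht.smul_smul_self,
    neg_sub]

theorem IsDividedDifferenceStable.smul_mem {s : ι → Γ} {α : ι → A} {F : ℕ → AddSubgroup A}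
    (R : IsReflectionSystem s α F) (hM : ∀ i, HasDividedDifference M (s i) (α i))
    {L : Submodule A M} (hL : IsDividedDifferenceStable s α L) (g : Γ) : ∀ m ∈ L, g • m ∈ L := by
  refine forall_smul_mem_of_closure_eq_top (P := (L : Set M)) R.closure_range
    (fun i ↦ (R.isReflection i).mul_self) (fun i m hm ↦ ?_) g
  obtain ⟨w, ⟨hw, hmw⟩, -⟩ := hM i m
  rw [← sub_sub_cancel m (s i • m), hmw]
  exact L.sub_mem hm (L.smul_mem _ (hL i m hm w hw hmw))

variable [Finite Γ] [IsDomain A] [Algebra ℚ A]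
  {s : ι → Γ} {α : ι → A} {F : ℕ → AddSubgroup A}

theorem IsDividedDifferenceStable.le_span_fixedPoints (R : IsReflectionSystem s α F)
    {J : Ideal A} (hJ : IsDividedDifferenceStable s α J) :
    J ≤ Ideal.span {y | (∀ g : Γ, g • y = y) ∧ y ∈ J} := by
  intro x hx
  obtain ⟨n, hn⟩ := R.filtration.exhaustive x
  have key := mem_span_fixedPoints_of_filtration (G := fun n ↦ J.toAddSubgroup ⊓ F n)
    R.closure_range α ?_ ?_ ?_ n x ⟨hx, hn⟩
  · refine Submodule.span_mono ?_ key
    rintro y ⟨hy, n, hyJ, -⟩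
    exact ⟨hy, hyJ⟩
  · rw [R.filtration.zero, inf_bot_eq]
  · exact fun n g x hx ↦
      AddSubgroup.mem_inf.2
        ⟨hJ.smul_mem R (fun i ↦ (R.isReflection i).hasDividedDifference) g x hx.1,
          R.smul_mem n g x hx.2⟩
  · intro n i x hx
    obtain ⟨w, ⟨hw, hxw⟩, -⟩ := (R.isReflection i).hasDividedDifference x
    refine ⟨w, ⟨hJ i x hx.1 w hw hxw, R.filtration.of_mul_mem (R.isReflection i).prime ?_⟩, hxw⟩
    rw [← smul_eq_mul, ← hxw]
    exact sub_mem hx.2 (R.smul_mem _ _ x hx.2)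

/-- As `J` is generated by invariants and `c ∈ J`, the average of `c * c` lies in `c ^ 2 * J`; but
`c ^ 2` is its own average. -/
theorem IsDividedDifferenceStable.eq_top_of_discriminant_mem (R : IsReflectionSystem s α F)
    {c : A} (hc : IsDiscriminant Γ c) {J : Ideal A} (hJ : IsDividedDifferenceStable s α J)
    (hcJ : c ∈ J) : J = ⊤ := by
  have := Fintype.ofFinite Γ
  have sum_smul_mem : ∀ x ∈ J, ∀ a, ∑ g : Γ, g • (c * (a * x)) ∈ Ideal.span {c ^ 2} * J := by
    intro x hx
    replace hx := hJ.le_span_fixedPoints R hx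
    induction hx using Submodule.span_induction with
    | mem y hy =>
      intro a
      simp only [← mul_assoc, smul_mul' _ (c * a), hy.1, ← Finset.sum_mul]
      exact Ideal.mul_mem_mul
        (Ideal.mem_span_singleton.2 (hc.sq_dvd_sum_smul R.smul_unit a)) hy.2
    | zero => simp only [mul_zero, smul_zero, Finset.sum_const_zero, zero_mem, implies_true]
    | add x y _ _ hx hy =>
      intro a
      simp only [mul_add, smul_add, Finset.sum_add_distrib]
      exact add_mem (hx a) (hy a)
    | smul b x _ hx =>
      intro a
      simpa only [smul_eq_mul, mul_assoc] using hx (a * b)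
  obtain ⟨b, hb, hsum⟩ := Ideal.mem_span_singleton_mul.1 (sum_smul_mem c hcJ 1)
  rw [one_mul, ← sq] at hsum
  simp only [hc.smul_sq R, Finset.sum_const, Finset.card_univ, nsmul_eq_mul] at hsum
  rw [mul_comm _ (c ^ 2)] at hsum
  rw [mul_left_cancel₀ (pow_ne_zero 2 hc.ne_zero) hsum] at hb
  exact J.eq_top_of_isUnit_mem hb (isUnit_natCast_of_algebra_rat Fintype.card_ne_zero)

end DividedDifferences

section Interpolation

variable {Γ A ι : Type*} [Group Γ] [CommRing A] [MulSemiringAction Γ A]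

/-- Functions `Γ → A` with `Γ` acting on both source and target, so that the invariant functions
are the orbit maps `g ↦ g • b`. A type synonym, as `Γ` acts on `Γ → A` through the target only. -/
def TwistedFunction (Γ A : Type*) : Type _ := Γ → A

namespace TwistedFunction

instance : AddCommGroup (TwistedFunction Γ A) := inferInstanceAs (AddCommGroup (Γ → A))

instance : Module A (TwistedFunction Γ A) := inferInstanceAs (Module A (Γ → A))

instance : DistribMulAction Γ (TwistedFunction Γ A) where
  smul h z := fun g ↦ h • z (h⁻¹ * g)
  one_smul z := funext fun g ↦ by
    change (1 : Γ) • z (1⁻¹ * g) = z g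
    rw [one_smul, inv_one, one_mul]
  mul_smul h k z := funext fun g ↦ by
    change (h * k) • z ((h * k)⁻¹ * g) = h • k • z (k⁻¹ * (h⁻¹ * g))
    rw [mul_smul, mul_inv_rev, mul_assoc]
  smul_zero h := funext fun _ ↦ smul_zero h
  smul_add h _ _ := funext fun _ ↦ smul_add h _ _

theorem smul_apply (h : Γ) (z : TwistedFunction Γ A) (g : Γ) : (h • z) g = h • z (h⁻¹ * g) := rfl

theorem apply_eq_smul_of_fixed {z : TwistedFunction Γ A} (hz : ∀ h : Γ, h • z = z) (g : Γ) :
    z g = g • z 1 := by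
  rw [← congrFun (hz g) g, smul_apply, inv_mul_cancel]

end TwistedFunction

variable (Γ) in
/-- The functions on `Γ` with values in `F n` whose values at `g` and `t * g` are congruent modulo
the root of `t`, for every reflection `t`. -/
def congruenceFunctions (F : ℕ → AddSubgroup A) (n : ℕ) :
    AddSubgroup (TwistedFunction Γ A) where
  carrier := {z | (∀ g, z g ∈ F n) ∧
    ∀ (t : Γ) (p : A), IsReflection t p → ∀ g, p ∣ z g - z (t * g)}
  zero_mem' := ⟨fun _ ↦ zero_mem _, fun _ p _ _ ↦ (sub_self (0 : A)).symm ▸ dvd_zero p⟩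
  add_mem' {z w} hz hw := ⟨fun g ↦ add_mem (hz.1 g) (hw.1 g), fun t p ht g ↦ by
    change p ∣ z g + w g - (z (t * g) + w (t * g))
    rw [add_sub_add_comm]
    exact dvd_add (hz.2 t p ht g) (hw.2 t p ht g)⟩
  neg_mem' {z} hz := ⟨fun g ↦ neg_mem (hz.1 g), fun t p ht g ↦ by
    change p ∣ -z g - -z (t * g)
    rw [neg_sub_neg, dvd_sub_comm]
    exact hz.2 t p ht g⟩

theorem smul_mem_congruenceFunctions {F : ℕ → AddSubgroup A} {n : ℕ}
    (hF : ∀ (g : Γ), ∀ a ∈ F n, g • a ∈ F n) (h : Γ) {z : TwistedFunction Γ A}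
    (hz : z ∈ congruenceFunctions Γ F n) : h • z ∈ congruenceFunctions Γ F n := by
  refine ⟨fun g ↦ hF h _ (hz.1 _), fun t p ht g ↦ ?_⟩
  obtain ⟨b, hb⟩ := hz.2 _ _ (ht.conj h⁻¹) (h⁻¹ * g)
  refine ⟨h • b, ?_⟩
  rw [inv_inv, show h⁻¹ * t * h * (h⁻¹ * g) = h⁻¹ * (t * g) by group] at hb
  rw [TwistedFunction.smul_apply, TwistedFunction.smul_apply, ← smul_sub, hb, smul_mul',
    smul_inv_smul]

namespace IsReflectionSystem

variable [Finite Γ] [IsDomain A] [Algebra ℚ A] [FaithfulSMul Γ A]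
  {s : ι → Γ} {α : ι → A} {F : ℕ → AddSubgroup A}

theorem exists_dividedDifference_congruenceFunctions (R : IsReflectionSystem s α F) {n : ℕ}
    (i : ι) {z : TwistedFunction Γ A} (hz : z ∈ congruenceFunctions Γ F (n + 1)) :
    ∃ w ∈ congruenceFunctions Γ F n, z - s i • z = α i • w := by
  have hs := R.isReflection i
  have root_dvd (g : Γ) : α i ∣ z g - s i • z (s i * g) := by
    rw [← sub_add_sub_cancel _ (z (s i * g))]
    exact dvd_add (hz.2 _ _ hs g) (hs.dvd_sub_smul _)
  choose w hw using root_dvd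
  refine ⟨w, ⟨fun g ↦ R.filtration.of_mul_mem hs.prime ?_, fun t p ht g ↦ ?_⟩, ?_⟩
  · rw [← hw]
    exact sub_mem (hz.1 _) (R.smul_mem _ _ _ (hz.1 _))
  · by_cases hp : p ∣ α i
    · obtain rfl := ht.eq_of_dvd R.filtration R.smul_unit hs hp
      have smul_w : w (s i * g) = s i • w g := by
        refine mul_left_cancel₀ hs.prime.ne_zero ?_
        rw [← hw, ← neg_inj, ← neg_mul (α i), ← hs.smul_root, ← smul_mul', ← hw, ← mul_assoc,
          hs.mul_self, one_mul, smul_sub, hs.smul_smul_self, neg_sub]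
      rw [smul_w]
      exact ht.dvd_sub_smul (w g)
    · refine (ht.prime.dvd_or_dvd ?_).resolve_left hp
      obtain ⟨b, hb⟩ := hz.2 _ _ (ht.conj (s i)) (s i * g)
      have eq_smul : s i • z (s i * g) - s i • z (s i * (t * g)) = p * s i • b := by
        rw [hs.inv_eq, show s i * t * s i * (s i * g) = s i * (t * (s i * s i) * g) by group,
          hs.mul_self, mul_one] at hb
        rw [← smul_sub, hb, smul_mul', hs.smul_smul_self]
      rw [mul_sub, ← hw, ← hw, sub_sub_sub_comm, eq_smul]
      exact dvd_sub (hz.2 t p ht g) (dvd_mul_right _ _)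
  · funext g
    change z g - s i • z ((s i)⁻¹ * g) = α i * w g
    rw [hs.inv_eq, hw]

theorem single_mem_span_orbitMaps (R : IsReflectionSystem s α F) [DecidableEq Γ] {c : A}
    (hc : ∀ (t : Γ) (p : A), IsReflection t p → p ∣ c) :
    (Pi.single 1 c : Γ → A) ∈ Submodule.span A (Set.range fun (b : A) (g : Γ) ↦ g • b) := by
  obtain ⟨n, hn⟩ := R.filtration.exhaustive c
  have single_eq (g : Γ) : (Pi.single 1 c : Γ → A) g = c ∨ (Pi.single 1 c : Γ → A) g = 0 := by
    rw [Pi.single_apply]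
    exact ite_eq_or_eq _ _ _
  have key := mem_span_fixedPoints_of_filtration (X := TwistedFunction Γ A) R.closure_range α
    (G := congruenceFunctions Γ F) ?_ (fun n h z ↦ smul_mem_congruenceFunctions (R.smul_mem n) h)
    (fun n i z ↦ R.exists_dividedDifference_congruenceFunctions i) n (Pi.single 1 c) ?_
  · refine Submodule.span_mono ?_ key
    rintro z ⟨hz, -⟩
    exact ⟨z 1, funext fun g ↦ (TwistedFunction.apply_eq_smul_of_fixed hz g).symm⟩
  · refine (AddSubgroup.eq_bot_iff_forall _).2 fun z hz ↦ funext fun g ↦ ?_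
    exact (AddSubgroup.mem_bot).1 (R.filtration.zero ▸ hz.1 g)
  · refine ⟨fun g ↦ ?_, fun t p ht g ↦ ?_⟩
    · rcases single_eq g with h | h
      · exact h.symm ▸ hn
      · exact h.symm ▸ zero_mem _
    · have dvd_single (g : Γ) : p ∣ (Pi.single 1 c : Γ → A) g := by
        rcases single_eq g with h | h
        · exact h.symm ▸ hc t p ht
        · exact h.symm ▸ dvd_zero p
      exact dvd_sub (dvd_single g) (dvd_single (t * g))

end IsReflectionSystem

end Interpolation

section Comparison

variable {Γ A M ι : Type*} [Group Γ] [CommRing A] [MulSemiringAction Γ A] [AddCommGroup M]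
  [Module A M] [DistribMulAction Γ M] [SMulDistribClass Γ A M]
  {s : ι → Γ} {α : ι → A} {F : ℕ → AddSubgroup A}

/-- Modulo `s i`-invariants, everything is `α i` times a divided difference, so it suffices to test
membership in the colon ideal on `s i`-invariants. -/
theorem IsDividedDifferenceStable.colon [Algebra ℚ A] (hs : ∀ i, IsReflection (s i) (α i))
    (hM : ∀ i, HasDividedDifference M (s i) (α i)) {L L' : Submodule A M}
    (hL : IsDividedDifferenceStable s α L) (hL' : IsDividedDifferenceStable s α L') :
    IsDividedDifferenceStable s α (L.colon (L' : Set M)) := by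
  intro i a ha w hw haw
  have smul_mem_of_fixed {m : M} (hm : m ∈ L') (hfix : s i • m = m) : w • m ∈ L := by
    refine hL i (a • m) (Submodule.mem_colon.1 ha m hm) _ ?_ ?_
    · rw [smul_distrib_smul, hw, hfix]
    · rw [smul_distrib_smul, hfix, ← sub_smul, haw, smul_assoc]
  refine Submodule.mem_colon.2 fun m hm ↦ ?_
  obtain ⟨u, ⟨hu, hmu⟩, -⟩ := hM i m
  have hu_mem : u ∈ L' := hL' i m hm u hu hmu
  have hsm_mem : s i • m ∈ L' := by
    rw [← sub_sub_cancel m (s i • m), hmu]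
    exact L'.sub_mem hm (L'.smul_mem _ hu_mem)
  have two_smul_eq : (2 : A) • w • m = w • (m + s i • m) + α i • w • u := by
    rw [smul_comm (α i), ← hmu, ← smul_add, smul_comm (2 : A), two_smul, add_add_sub_cancel]
  have hfix : s i • (m + s i • m) = m + s i • m := by
    rw [smul_add, (hs i).smul_smul_self, add_comm]
  rw [← L.smul_mem_iff_of_isUnit (isUnit_two_of_algebra_rat A), two_smul_eq]
  exact L.add_mem (smul_mem_of_fixed (L'.add_mem hm hsm_mem) hfix)
    (L.smul_mem _ (smul_mem_of_fixed hu_mem hu))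

variable [Finite Γ] [IsDomain A] [Algebra ℚ A]

theorem IsReflectionSystem.smul_mem_of_forall_root_dvd [FaithfulSMul Γ A]
    (R : IsReflectionSystem s α F) {c : A}
    (hc : ∀ (t : Γ) (p : A), IsReflection t p → p ∣ c) {L L' : Submodule A M}
    (hL' : ∀ (g : Γ), ∀ m ∈ L', g • m ∈ L')
    (hfix : ∀ m ∈ L', (∀ g : Γ, g • m = m) → m ∈ L) {m : M} (hm : m ∈ L') : c • m ∈ L := by
  classical
  have := Fintype.ofFinite Γ
  let eval : (Γ → A) →ₗ[A] M := ∑ g : Γ, (LinearMap.proj g).smulRight (g • m)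
  have eval_apply (z : Γ → A) : eval z = ∑ g : Γ, z g • g • m := by
    simp only [eval, LinearMap.sum_apply, LinearMap.smulRight_apply, LinearMap.proj_apply]
  have eval_mem : Submodule.span A (Set.range fun (b : A) (g : Γ) ↦ g • b) ≤ L.comap eval := by
    refine Submodule.span_le.2 ?_
    rintro _ ⟨b, rfl⟩
    rw [SetLike.mem_coe, Submodule.mem_comap, eval_apply]
    simp only [← smul_distrib_smul]
    exact hfix _ (L'.sum_mem fun g _ ↦ hL' g _ (L'.smul_mem b hm))
      fun h ↦ smul_sum_smul h (b • m)
  have key := eval_mem (R.single_mem_span_orbitMaps hc)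
  rw [Submodule.mem_comap, eval_apply, Fintype.sum_eq_single 1] at key
  · rwa [Pi.single_eq_same, one_smul] at key
  · intro g hg
    rw [Pi.single_eq_of_ne hg, zero_smul]

variable [UniqueFactorizationMonoid A] [FaithfulSMul Γ A]

theorem IsDividedDifferenceStable.le_of_fixedPoints_le (R : IsReflectionSystem s α F)
    (hM : ∀ i, HasDividedDifference M (s i) (α i)) {L L' : Submodule A M}
    (hL : IsDividedDifferenceStable s α L) (hL' : IsDividedDifferenceStable s α L')
    (hfix : ∀ m ∈ L', (∀ g : Γ, g • m = m) → m ∈ L) : L' ≤ L := by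
  obtain ⟨c, hc⟩ := exists_isDiscriminant (Γ := Γ) (A := A)
  have colon_eq_top : L.colon (L' : Set M) = ⊤ :=
    (hL.colon R.isReflection hM hL').eq_top_of_discriminant_mem R hc <| Submodule.mem_colon.2
      fun _ ↦ R.smul_mem_of_forall_root_dvd (fun _ _ ↦ hc.root_dvd) (hL'.smul_mem R hM) hfix
  intro m hm
  simpa only [one_smul] using
    Submodule.mem_colon.1 ((Ideal.eq_top_iff_one _).1 colon_eq_top) m hm

theorem IsReflectionSystem.bijective_of_bijOn_fixedPoints {X : Type*} [AddCommGroup X]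
    [Module A X] [DistribMulAction Γ X] [SMulDistribClass Γ A X] (R : IsReflectionSystem s α F)
    (hX : ∀ i, HasDividedDifference X (s i) (α i))
    (hM : ∀ i, HasDividedDifference M (s i) (α i)) (f : X →ₗ[A] M)
    (hf : ∀ (g : Γ) (x : X), f (g • x) = g • f x)
    (hinj : ∀ x, (∀ g : Γ, g • x = x) → f x = 0 → x = 0)
    (hsurj : ∀ m : M, (∀ g : Γ, g • m = m) → m ∈ LinearMap.range f) : Function.Bijective f := by
  have bot_stable : IsDividedDifferenceStable s α (⊥ : Submodule A X) := by
    rintro i _ rfl w hw hmw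
    exact (hX i).eq_zero_of_smul_eq_zero hw (by rw [← hmw, smul_zero, sub_zero])
  have ker_stable : IsDividedDifferenceStable s α (LinearMap.ker f) := by
    intro i x hx w hw hxw
    rw [LinearMap.mem_ker] at hx ⊢
    refine (hM i).eq_zero_of_smul_eq_zero (by rw [← hf, hw]) ?_
    rw [← f.map_smul, ← hxw, map_sub, hf, hx, smul_zero, sub_zero]
  have range_stable : IsDividedDifferenceStable s α (LinearMap.range f) := by
    rintro i _ ⟨x, rfl⟩ w hw hxw
    obtain ⟨u, ⟨hu, hxu⟩, -⟩ := hX i x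
    exact ⟨u, (hM i (f x)).unique ⟨by rw [← hf, hu], by rw [← f.map_smul, ← hxu, map_sub, hf]⟩
      ⟨hw, hxw⟩⟩
  refine ⟨LinearMap.ker_eq_bot.1 (le_bot_iff.1 ?_), LinearMap.range_eq_top.1 (top_le_iff.1 ?_)⟩
  · exact bot_stable.le_of_fixedPoints_le R hX ker_stable fun x hx hfix ↦ hinj x hfix hx
  · exact range_stable.le_of_fixedPoints_le R hM (fun _ _ _ _ _ _ ↦ Submodule.mem_top)
      fun m _ ↦ hsurj m

end Comparison

section BaseChange

variable {Γ A B N : Type*} [Group Γ] [CommRing A] [MulSemiringAction Γ A] [CommRing B]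
  [Algebra B A] [SMulCommClass B Γ A] [AddCommGroup N] [Module B N]

instance : SMulDistribClass Γ A (A ⊗[B] N) where
  smul_distrib_smul g a x := by
    induction x with
    | zero => simp only [smul_zero]
    | tmul b n => simp only [TensorProduct.smul_tmul', smul_eq_mul, smul_mul']
    | add x y hx hy => simp only [smul_add, hx, hy]

variable (B) in
theorem IsReflection.exists_dividedDifference_linearMap [IsDomain A] {t : Γ} {p : A}
    (ht : IsReflection t p) : ∃ D : A →ₗ[B] A, ∀ a, t • D a = D a ∧ a - t • a = p • D a := by
  choose D hD hD_unique using ht.hasDividedDifference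
  refine ⟨⟨⟨D, fun a b ↦ ?_⟩, fun b a ↦ ?_⟩, hD⟩
  · refine (hD_unique _ _ ⟨?_, ?_⟩).symm
    · rw [smul_add, (hD a).1, (hD b).1]
    · rw [smul_add, add_sub_add_comm, (hD a).2, (hD b).2, smul_add]
  · refine (hD_unique _ _ ⟨?_, ?_⟩).symm
    · rw [RingHom.id_apply, ← smul_comm, (hD a).1]
    · rw [RingHom.id_apply, ← smul_comm b, ← smul_sub, (hD a).2, smul_comm]

/-- The divided difference operator is linear over the invariants, hence extends to the base
change; uniqueness holds since it maps `p • w` to `w + t • w`. -/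
theorem IsReflection.hasDividedDifference_tensorProduct [IsDomain A] [Algebra ℚ A] {t : Γ} {p : A}
    (ht : IsReflection t p) : HasDividedDifference (A ⊗[B] N) t p := by
  obtain ⟨D, hD⟩ := ht.exists_dividedDifference_linearMap B
  have apply_root_mul (a : A) : D (p * a) = a + t • a := by
    refine mul_left_cancel₀ ht.prime.ne_zero ?_
    rw [← smul_eq_mul p (D _), ← (hD _).2, smul_mul', ht.smul_root, neg_mul, sub_neg_eq_add,
      mul_add]
  let D' : A ⊗[B] N →ₗ[B] A ⊗[B] N := D.rTensor N
  have smul_D' (x : A ⊗[B] N) : t • D' x = D' x := by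
    induction x with
    | zero => rw [map_zero, smul_zero]
    | tmul a n => rw [LinearMap.rTensor_tmul, TensorProduct.smul_tmul', (hD a).1]
    | add x y hx hy => rw [map_add, smul_add, hx, hy]
  have sub_smul_eq (x : A ⊗[B] N) : x - t • x = p • D' x := by
    induction x with
    | zero => simp only [map_zero, smul_zero, sub_zero]
    | tmul a n =>
      rw [LinearMap.rTensor_tmul, TensorProduct.smul_tmul', TensorProduct.smul_tmul',
        ← TensorProduct.sub_tmul, (hD a).2]
    | add x y hx hy => rw [smul_add, add_sub_add_comm, hx, hy, map_add, smul_add]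
  have D'_root_smul (x : A ⊗[B] N) : D' (p • x) = x + t • x := by
    induction x with
    | zero => simp only [map_zero, smul_zero, add_zero]
    | tmul a n =>
      rw [TensorProduct.smul_tmul', TensorProduct.smul_tmul', LinearMap.rTensor_tmul,
        smul_eq_mul, apply_root_mul, TensorProduct.add_tmul]
    | add x y hx hy => rw [smul_add, map_add, hx, hy, smul_add, add_add_add_comm]
  refine fun x ↦ ⟨D' x, ⟨smul_D' x, sub_smul_eq x⟩, fun w ⟨hw, hxw⟩ ↦ ?_⟩
  have key : (2 : A) • w = (2 : A) • D' x := by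
    rw [two_smul, two_smul]
    nth_rw 2 [← hw]
    nth_rw 2 [← smul_D' x]
    rw [← D'_root_smul, ← D'_root_smul, ← hxw, ← sub_smul_eq]
  exact (isUnit_two_of_algebra_rat A).smul_left_cancel.1 key

theorem exists_sum_smul_eq_one_tmul [Fintype Γ] [Algebra.IsInvariant B A Γ] (x : A ⊗[B] N) :
    ∃ n : N, ∑ g : Γ, g • x = 1 ⊗ₜ n := by
  induction x with
  | zero => exact ⟨0, by simp only [smul_zero, Finset.sum_const_zero, TensorProduct.tmul_zero]⟩
  | tmul a n =>
    obtain ⟨b, hb⟩ := Algebra.IsInvariant.isInvariant (A := B) (∑ g : Γ, g • a)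
      fun h : Γ ↦ smul_sum_smul h a
    refine ⟨b • n, ?_⟩
    simp only [TensorProduct.smul_tmul']
    rw [← TensorProduct.sum_tmul, ← hb, Algebra.algebraMap_eq_smul_one, TensorProduct.smul_tmul]
  | add x y hx hy =>
    obtain ⟨m, hm⟩ := hx
    obtain ⟨n, hn⟩ := hy
    exact ⟨m + n, by simp only [smul_add, Finset.sum_add_distrib, hm, hn, TensorProduct.tmul_add]⟩

end BaseChange

section Descent

variable {Γ A B M ι : Type*} [Group Γ] [CommRing A] [MulSemiringAction Γ A] [CommRing B]
  [Algebra B A] [AddCommGroup M] [Module A M] [Module B M] [IsScalarTower B A M]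
  [DistribMulAction Γ M]

variable (Γ B M) in
/-- The invariants of `Γ` in `M`, as a module over a ring `B` commuting with `Γ`. -/
def invariantSubmodule [SMulCommClass B Γ M] : Submodule B M where
  __ := FixedPoints.addSubgroup Γ M
  smul_mem' b m hm g := by rw [← smul_comm, hm g]

variable [SMulDistribClass Γ A M] [SMulCommClass B Γ A] [SMulCommClass B Γ M]
  [Algebra.IsInvariant B A Γ] [Finite Γ] [FaithfulSMul Γ A] [IsDomain A]
  [UniqueFactorizationMonoid A] [Algebra ℚ A] {s : ι → Γ} {α : ι → A} {F : ℕ → AddSubgroup A}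

variable (B) in
theorem IsReflectionSystem.bijective_liftBaseChange (R : IsReflectionSystem s α F)
    (hM : ∀ i, HasDividedDifference M (s i) (α i)) :
    Function.Bijective ((invariantSubmodule Γ B M).subtype.liftBaseChange A) := by
  have := Fintype.ofFinite Γ
  have apply_one_tmul (n : invariantSubmodule Γ B M) :
      (invariantSubmodule Γ B M).subtype.liftBaseChange A (1 ⊗ₜ n) = n := by
    rw [LinearMap.liftBaseChange_tmul, one_smul, Submodule.subtype_apply]
  refine R.bijective_of_bijOn_fixedPoints
    (fun i ↦ (R.isReflection i).hasDividedDifference_tensorProduct) hM _ (fun g x ↦ ?_)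
    (fun x hx hfx ↦ ?_) fun m hm ↦ ⟨1 ⊗ₜ ⟨m, hm⟩, apply_one_tmul ⟨m, hm⟩⟩
  · induction x with
    | zero => simp only [smul_zero, map_zero]
    | tmul a n =>
      rw [TensorProduct.smul_tmul', LinearMap.liftBaseChange_tmul, LinearMap.liftBaseChange_tmul,
        smul_distrib_smul, Submodule.subtype_apply, n.2 g]
    | add x y hx hy => simp only [smul_add, map_add, hx, hy]
  · obtain ⟨n, hn⟩ := exists_sum_smul_eq_one_tmul (Γ := Γ) x
    have hcard : (Fintype.card Γ : A) • x = 1 ⊗ₜ n := by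
      rw [← hn, Finset.sum_congr rfl fun g _ ↦ hx g, Finset.sum_const, Finset.card_univ,
        Nat.cast_smul_eq_nsmul]
    have hn_zero : n = 0 := by
      rw [← Submodule.coe_eq_zero, ← apply_one_tmul, ← hcard, map_smul, hfx, smul_zero]
    rw [hn_zero, TensorProduct.tmul_zero] at hcard
    exact (isUnit_natCast_of_algebra_rat Fintype.card_ne_zero).smul_eq_zero.1 hcard

end Descent

section PolynomialAction

open MvPolynomial

variable {d : ℕ}

theorem lin_eq_sumSMulX (θ : Vd d →ₗ[ℂ] ℂ) :
    lin θ = sumSMulX (Finsupp.equivFunOnFinite.symm fun j ↦ θ (Pi.single j 1)) := by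
  rw [sumSMulX, Finsupp.linearCombination_apply, Finsupp.sum_fintype _ _ fun j ↦ zero_smul ℂ (X j)]
  rfl

theorem coeff_lin (θ : Vd d →ₗ[ℂ] ℂ) (j : Fin d) :
    coeff (Finsupp.single j 1) (lin θ) = θ (Pi.single j 1) := by
  rw [lin_eq_sumSMulX, coeff_sumSMulX, Finsupp.equivFunOnFinite_symm_apply_apply]

theorem lin_sub (θ η : Vd d →ₗ[ℂ] ℂ) : lin (θ - η) = lin θ - lin η := by
  simp only [lin, LinearMap.sub_apply, sub_smul, Finset.sum_sub_distrib]

theorem lin_smul (c : ℂ) (θ : Vd d →ₗ[ℂ] ℂ) : lin (c • θ) = c • lin θ := by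
  simp only [lin, LinearMap.smul_apply, smul_assoc, Finset.smul_sum]

theorem lin_proj (j : Fin d) : lin (LinearMap.proj j) = X j := by
  simp only [lin, LinearMap.proj_apply, Pi.single_apply, ite_smul, one_smul, zero_smul,
    Finset.sum_ite_eq, Finset.mem_univ, if_true]

theorem prime_lin {θ : Vd d →ₗ[ℂ] ℂ} (hθ : θ ≠ 0) : Prime (lin θ) := by
  obtain ⟨j, hj⟩ : ∃ j, θ (Pi.single j 1) ≠ 0 := by
    by_contra! h
    exact hθ (LinearMap.pi_ext' fun j ↦ LinearMap.ext_ring (h j))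
  rw [lin_eq_sumSMulX, ← UniqueFactorizationMonoid.irreducible_iff_prime]
  refine irreducible_sumSMulX _ ⟨j, Finsupp.mem_support_iff.2 hj⟩ fun r hr ↦ ?_
  exact isUnit_of_dvd_unit (hr j) (isUnit_iff_ne_zero.2 hj)

theorem glAct_lin (g : GL (Fin d) ℂ) (θ : Vd d →ₗ[ℂ] ℂ) :
    glAct g (lin θ) = lin (θ ∘ₗ Matrix.toLin' (g⁻¹).val) := by
  have apply_single (k : Fin d) : (θ ∘ₗ Matrix.toLin' (g⁻¹).val) (Pi.single k 1) =
      ∑ j, θ (Pi.single j 1) * (g⁻¹).val j k := by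
    rw [LinearMap.comp_apply, Matrix.toLin'_apply, Matrix.mulVec_single_one,
      ← (Pi.basisFun ℂ (Fin d)).sum_repr ((g⁻¹).val.col k), map_sum]
    simp only [map_smul, Pi.basisFun_apply, Pi.basisFun_repr, smul_eq_mul, mul_comm,
      Matrix.col_apply]
  rw [lin, lin, map_sum]
  simp only [map_smul, glAct, aeval_X, Finset.smul_sum, smul_smul, apply_single, Finset.sum_smul]
  exact Finset.sum_comm

instance : MulSemiringAction (GL (Fin d) ℂ) (Ad d) where
  smul g := glAct g
  one_smul := by
    refine DFunLike.congr_fun (f := glAct 1) (g := AlgHom.id ℂ (Ad d)) (algHom_ext fun j ↦ ?_)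
    rw [← lin_proj, glAct_lin, inv_one, Units.val_one, Matrix.toLin'_one, LinearMap.comp_id,
      AlgHom.id_apply]
  mul_smul g h := by
    refine DFunLike.congr_fun (f := glAct (g * h)) (g := (glAct g).comp (glAct h))
      (algHom_ext fun j ↦ ?_)
    rw [← lin_proj, AlgHom.comp_apply, glAct_lin, glAct_lin, glAct_lin, mul_inv_rev, Units.val_mul,
      Matrix.toLin'_mul, LinearMap.comp_assoc]
  smul_zero g := map_zero (glAct g)
  smul_add g := map_add (glAct g)
  smul_one g := map_one (glAct g)
  smul_mul g := map_mul (glAct g)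

theorem smul_eq_glAct (g : GL (Fin d) ℂ) (a : Ad d) : g • a = glAct g a := rfl

theorem gl_smul_C (g : GL (Fin d) ℂ) (c : ℂ) : g • (C c : Ad d) = C c :=
  (glAct g).commutes c

instance : FaithfulSMul (GL (Fin d) ℂ) (Ad d) where
  eq_of_smul_eq_smul {g h} hgh := by
    refine inv_injective (Units.ext (Matrix.ext fun j k ↦ ?_))
    have key := congrArg (coeff (Finsupp.single k 1)) (hgh (X j))
    rwa [smul_eq_glAct, smul_eq_glAct, ← lin_proj, glAct_lin, glAct_lin, coeff_lin, coeff_lin,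
      LinearMap.comp_apply, LinearMap.comp_apply, Matrix.toLin'_apply, Matrix.toLin'_apply,
      Matrix.mulVec_single_one, Matrix.mulVec_single_one] at key

theorem totalDegree_aeval_le {σ τ R : Type*} [CommSemiring R] {f : σ → MvPolynomial τ R}
    (hf : ∀ i, (f i).IsHomogeneous 1) (p : MvPolynomial σ R) :
    (aeval f p).totalDegree ≤ p.totalDegree := by
  conv_lhs => rw [← sum_homogeneousComponent p, map_sum]
  refine totalDegree_finsetSum_le fun n hn ↦ ?_
  exact ((homogeneousComponent_isHomogeneous n p).aeval f hf).totalDegree_le.trans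
    ((one_mul n).trans_le (Nat.lt_succ_iff.1 (Finset.mem_range.1 hn)))

theorem totalDegree_gl_smul_le (g : GL (Fin d) ℂ) (a : Ad d) :
    (g • a).totalDegree ≤ a.totalDegree := by
  refine totalDegree_aeval_le (fun j ↦ IsHomogeneous.sum _ _ _ fun k _ ↦ ?_) a
  rw [smul_eq_C_mul]
  exact isHomogeneous_C_mul_X _ k

theorem totalDegree_pos_of_prime {σ K : Type*} [Field K] {p : MvPolynomial σ K} (hp : Prime p) :
    0 < p.totalDegree := by
  refine Nat.pos_of_ne_zero fun h ↦ hp.not_isUnit ?_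
  have hC := totalDegree_eq_zero_iff_eq_C.1 h
  rw [hC]
  refine (isUnit_iff_ne_zero.2 fun h0 ↦ hp.ne_zero ?_).map C
  rw [hC, h0, C_0]

variable (d) in
/-- The polynomials of degree less than `n`; the degree of `0` counts as `-∞`, so that `n = 0` gives
the zero subgroup. -/
def degreeFiltration : ℕ → AddSubgroup (Ad d)
  | 0 => ⊥
  | n + 1 => (restrictTotalDegree (Fin d) ℂ n).toAddSubgroup

theorem mem_degreeFiltration_succ {n : ℕ} {a : Ad d} :
    a ∈ degreeFiltration d (n + 1) ↔ a.totalDegree ≤ n :=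
  mem_restrictTotalDegree (Fin d) n a

theorem isDegreeFiltration_degreeFiltration : IsDegreeFiltration (degreeFiltration d) where
  zero := rfl
  exhaustive a := ⟨a.totalDegree + 1, mem_degreeFiltration_succ.2 le_rfl⟩
  of_mul_mem {n p b} hp hb := by
    rcases eq_or_ne b 0 with rfl | hb_ne
    · exact zero_mem _
    rw [mem_degreeFiltration_succ, totalDegree_mul_of_isDomain hp.ne_zero hb_ne] at hb
    have hp_pos := totalDegree_pos_of_prime hp
    obtain ⟨n, rfl⟩ : ∃ k, n = k + 1 := ⟨n - 1, by lia⟩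
    exact mem_degreeFiltration_succ.2 (by lia)

theorem smul_mem_degreeFiltration {n : ℕ} (g : GL (Fin d) ℂ) {a : Ad d}
    (ha : a ∈ degreeFiltration d n) : g • a ∈ degreeFiltration d n := by
  cases n with
  | zero => rw [(AddSubgroup.mem_bot).1 ha, smul_zero]; exact zero_mem _
  | succ n =>
    rw [mem_degreeFiltration_succ] at ha ⊢
    exact (totalDegree_gl_smul_le g a).trans ha

theorem smul_unit_eq_self (g : GL (Fin d) ℂ) (u : (Ad d)ˣ) : g • (u : Ad d) = u := by
  have hu := (isUnit_iff_totalDegree_of_isReduced.1 u.isUnit).2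
  rw [totalDegree_eq_zero_iff_eq_C.1 hu, gl_smul_C]

theorem dvd_sub_of_forall_dvd_X_sub {σ R : Type*} [CommRing R]
    (f : MvPolynomial σ R →ₐ[R] MvPolynomial σ R) {p : MvPolynomial σ R}
    (hf : ∀ j, p ∣ X j - f (X j)) (a : MvPolynomial σ R) : p ∣ a - f a := by
  let π := Ideal.Quotient.mkₐ R (Ideal.span {p})
  have hπ : π = π.comp f := algHom_ext fun j ↦
    Ideal.Quotient.eq.2 (Ideal.mem_span_singleton.2 (hf j))
  exact Ideal.mem_span_singleton.1 (Ideal.Quotient.eq.1 (DFunLike.congr_fun hπ a))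

end PolynomialAction

namespace CoxeterSetup

open MvPolynomial

variable {d n : ℕ} (S : CoxeterSetup d n)

theorem α_ne_zero (i : Fin n) : S.α i ≠ 0 := by
  intro h
  have := S.pairing i
  rw [h, LinearMap.zero_apply] at this
  exact two_ne_zero this.symm

theorem toLin'_s (i : Fin n) :
    Matrix.toLin' (S.s i : GL (Fin d) ℂ).val = Module.preReflection (S.coroot i) (S.α i) :=
  LinearMap.ext fun v ↦ S.refl i v

theorem s_mul_self (i : Fin n) : S.s i * S.s i = 1 := by
  refine Subtype.ext (Units.ext (Matrix.toLin'.injective (LinearMap.ext fun v ↦ ?_)))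
  rw [Subgroup.coe_mul, Units.val_mul, Matrix.toLin'_mul, toLin'_s, LinearMap.comp_apply,
    Module.involutive_preReflection (S.pairing i), Subgroup.coe_one, Units.val_one,
    Matrix.toLin'_one, LinearMap.id_apply]

theorem s_smul_lin (i : Fin n) (θ : Vd d →ₗ[ℂ] ℂ) :
    S.s i • lin θ = lin θ - θ (S.coroot i) • lin (S.α i) := by
  rw [Subgroup.smul_def, smul_eq_glAct, glAct_lin, ← Subgroup.coe_inv,
    inv_eq_of_mul_eq_one_left (S.s_mul_self i), toLin'_s, ← lin_smul, ← lin_sub]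
  refine congrArg lin (LinearMap.ext fun v ↦ ?_)
  rw [LinearMap.comp_apply, Module.preReflection_apply, map_sub, map_smul, LinearMap.sub_apply,
    LinearMap.smul_apply, smul_eq_mul, smul_eq_mul, mul_comm]

theorem isReflection_s (i : Fin n) : IsReflection (S.s i) (lin (S.α i)) where
  prime := prime_lin (S.α_ne_zero i)
  mul_self := S.s_mul_self i
  smul_root := by
    rw [s_smul_lin, S.pairing, two_smul, sub_add_cancel_left]
  dvd_sub_smul a := by
    refine dvd_sub_of_forall_dvd_X_sub (glAct (S.s i : GL (Fin d) ℂ)) (fun j ↦ ?_) a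
    change lin (S.α i) ∣ X j - S.s i • (X j : Ad d)
    rw [← lin_proj, s_smul_lin, sub_sub_cancel, smul_eq_C_mul]
    exact dvd_mul_left _ _

theorem isReflectionSystem :
    IsReflectionSystem S.s (fun i ↦ lin (S.α i)) (degreeFiltration d) where
  isReflection := S.isReflection_s
  closure_range := S.gen
  smul_unit g := smul_unit_eq_self (g : GL (Fin d) ℂ)
  filtration := isDegreeFiltration_degreeFiltration
  smul_mem _ g _ := smul_mem_degreeFiltration (g : GL (Fin d) ℂ)

end CoxeterSetup

section DescentFromFixedSubalgebras

variable {d n : ℕ} (S : CoxeterSetup d n) (Γ' : Subgroup S.Γ)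

instance : SMulCommClass (FixedSub S Γ') Γ' (Ad d) where
  smul_comm b g a := by
    change (b : Ad d) * g • a = g • ((b : Ad d) * a)
    rw [smul_mul', show g • (b : Ad d) = b from b.2 g g.2]

instance : SMulCommClass (FixedSub S ⊤) S.Γ (Ad d) where
  smul_comm b g a := smul_comm b (⟨g, Subgroup.mem_top g⟩ : (⊤ : Subgroup S.Γ)) a

instance : Algebra.IsInvariant (FixedSub S ⊤) (Ad d) S.Γ where
  isInvariant a ha := ⟨⟨a, fun g _ ↦ ha g⟩, rfl⟩

variable {S Γ'} {M : Type} [AddCommGroup M] [Module ℂ M] [Module (Ad d) M]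
  [IsScalarTower ℂ (Ad d) M] [DistribMulAction S.Γ M]

theorem Descends.hasDividedDifference {ρ : Γ' →* Module.End ℂ M}
    (hρ : ∀ (g : Γ') (m : M), ρ g m = (g : S.Γ) • m) (h : Descends S Γ' M ρ) {t : S.Γ} {p : Ad d}
    (ht : IsReflection t p) (htΓ' : t ∈ Γ') : HasDividedDifference M t p := by
  obtain ⟨N, _, _, e, he⟩ := h
  have ht' : IsReflection (⟨t, htΓ'⟩ : Γ') p :=
    ⟨ht.prime, Subtype.ext ht.mul_self, ht.smul_root, ht.dvd_sub_smul⟩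
  have he_smul (g : Γ') (x : Ad d ⊗[FixedSub S Γ'] N) : e (g • x) = g • e x := by
    induction x with
    | zero => simp only [smul_zero, map_zero]
    | tmul a n => exact ((hρ g _).symm.trans (he g a n)).symm
    | add x y hx hy => simp only [smul_add, map_add, hx, hy]
  exact ht'.hasDividedDifference_tensorProduct.of_equiv e (he_smul ⟨t, htΓ'⟩)

variable [SMulDistribClass S.Γ (Ad d) M]

instance : SMulCommClass (FixedSub S ⊤) S.Γ M where
  smul_comm b g m := by
    change (b : Ad d) • g • m = g • (b : Ad d) • m
    rw [smul_distrib_smul g (b : Ad d) m, show g • (b : Ad d) = b from b.2 g (Subgroup.mem_top g)]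

theorem descends_top_of_hasDividedDifference {ρ : (⊤ : Subgroup S.Γ) →* Module.End ℂ M}
    (hρ : ∀ (g : (⊤ : Subgroup S.Γ)) (m : M), ρ g m = (g : S.Γ) • m)
    (hM : ∀ i, HasDividedDifference M (S.s i) (lin (S.α i))) : Descends S ⊤ M ρ := by
  have := S.finite
  refine ⟨invariantSubmodule S.Γ (FixedSub S ⊤) M, inferInstance, Submodule.module _,
    LinearEquiv.ofBijective _ (S.isReflectionSystem.bijective_liftBaseChange _ hM), ?_⟩
  intro g a m
  rw [hρ, LinearEquiv.ofBijective_apply, LinearEquiv.ofBijective_apply,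
    LinearMap.liftBaseChange_tmul, LinearMap.liftBaseChange_tmul, smul_distrib_smul,
    Submodule.subtype_apply, m.2 g]
  rfl

end DescentFromFixedSubalgebras

/-- If a `Γ`-equivariant `A`-module `M` descends to `A^{⟨sᵢ⟩}` for every
simple reflection `sᵢ`, then `M` descends to `A^Γ`. -/
theorem descent_of_simple_descent {d n : ℕ} (S : CoxeterSetup d n) (M : Type)
    [AddCommGroup M] [Module ℂ M] [Module (Ad d) M] [IsScalarTower ℂ (Ad d) M]
    (ρ : S.Γ →* Module.End ℂ M)
    (hρ : ∀ (g : S.Γ) (f : Ad d) (m : M),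
      ρ g (f • m) = glAct (g : GL (Fin d) ℂ) f • ρ g m)
    (h : ∀ i : Fin n,
      Descends S (Subgroup.zpowers (S.s i)) M
        (ρ.comp (Subgroup.zpowers (S.s i)).subtype)) :
    Descends S ⊤ M (ρ.comp (Subgroup.subtype ⊤)) := by
  let : DistribMulAction S.Γ M := DistribMulAction.compHom M ρ
  have : SMulDistribClass S.Γ (Ad d) M := ⟨hρ⟩
  have hM (i : Fin n) : HasDividedDifference M (S.s i) (lin (S.α i)) :=
    (h i).hasDividedDifference (fun _ _ ↦ rfl) (S.isReflection_s i) (Subgroup.mem_zpowers (S.s i))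
  exact descends_top_of_hasDividedDifference (fun _ _ ↦ rfl) hM
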